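/- For every real number y, (1/6)·cos(2y) − (8/3)·cos(y) + 5/2 ≤ y². Equivalently, for every h > 0 and every real ξ, the fourth-order discrete Laplacian symbol satisfies ψ_h^{(4)}(ξ) ≤ ξ². -/

import Mathlib

/-- Discrete symbol of the fourth-order (p = 4) central finite difference
approximation of `-d²/dx²`. -/
noncomputable def psi4 (h ξ : ℝ) : ℝ :=
  ((1/6) * Real.cos (2*ξ*h) - (8/3) * Real.cos (ξ*h) + 5/2) / h^2

/-!
The function `y² - ((1/6) cos 2y - (8/3) cos y + 5/2)` is even and vanishes at `0`. Its second
derivative is the perfect square `(4/3) (1 - cos y)²`, so it is convex, and an even convex function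
is minimal at `0`. The bound for general `h` follows by rescaling, with `y = ξ h`.
-/

theorem map_zero_le_of_convexOn_of_even {𝕜 E β : Type*}
    [Field 𝕜] [LinearOrder 𝕜] [IsStrictOrderedRing 𝕜] [AddCommGroup E] [Module 𝕜 E]
    [AddCommMonoid β] [PartialOrder β] [Module 𝕜 β] {s : Set E} {f : E → β} {x : E}
    (hf : ConvexOn 𝕜 s f) (heven : Function.Even f) (hx : x ∈ s) (hx_neg : -x ∈ s) :
    f 0 ≤ f x :=
  calc
    f 0 = f ((1 / 2 : 𝕜) • x + (1 / 2 : 𝕜) • -x) := by rw [smul_neg, add_neg_cancel]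
    _ ≤ (1 / 2 : 𝕜) • f x + (1 / 2 : 𝕜) • f (-x) :=
      hf.2 hx hx_neg one_half_pos.le one_half_pos.le (add_halves 1)
    _ = f x := by rw [heven x, ← add_smul, add_halves, one_smul]

/-- The amount by which the exact symbol `y²` of `-d²/dx²` exceeds its fourth-order discrete
counterpart, in the dimensionless frequency `y = ξ h`. -/
noncomputable def symbolDefect (y : ℝ) : ℝ :=
  y ^ 2 - ((1 / 6) * Real.cos (2 * y) - (8 / 3) * Real.cos y + 5 / 2)

namespace symbolDefect

theorem even : Function.Even symbolDefect := fun y => by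
  simp only [symbolDefect, even_two.neg_pow, mul_neg, Real.cos_neg]

theorem map_zero : symbolDefect 0 = 0 := by
  norm_num [symbolDefect]

theorem hasDerivAt (y : ℝ) :
    HasDerivAt symbolDefect
      (2 * y + (1 / 3) * Real.sin (2 * y) - (8 / 3) * Real.sin y) y := by
  have hcos_two_mul := ((hasDerivAt_id y).const_mul 2).cos.const_mul (1 / 6)
  have hcos := (Real.hasDerivAt_cos y).const_mul (8 / 3)
  refine ((hasDerivAt_pow 2 y).sub ((hcos_two_mul.sub hcos).add_const (5 / 2))).congr_deriv ?_
  simp only [id_eq]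
  ring

theorem hasDerivAt_deriv (y : ℝ) :
    HasDerivAt (fun y => 2 * y + (1 / 3) * Real.sin (2 * y) - (8 / 3) * Real.sin y)
      ((4 / 3) * (1 - Real.cos y) ^ 2) y := by
  have htwo_mul := (hasDerivAt_id y).const_mul 2
  have hsin_two_mul := htwo_mul.sin.const_mul (1 / 3)
  have hsin := (Real.hasDerivAt_sin y).const_mul (8 / 3)
  refine ((htwo_mul.add hsin_two_mul).sub hsin).congr_deriv ?_
  rw [id_eq, Real.cos_two_mul]
  ring

theorem convexOn : ConvexOn ℝ Set.univ symbolDefect :=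
  convexOn_of_hasDerivWithinAt2_nonneg convex_univ
    (fun y _ => (hasDerivAt y).continuousAt.continuousWithinAt)
    (fun y _ => (hasDerivAt y).hasDerivWithinAt)
    (fun y _ => (hasDerivAt_deriv y).hasDerivWithinAt)
    (fun _ _ => by positivity)

theorem nonneg (y : ℝ) : 0 ≤ symbolDefect y :=
  map_zero.symm.trans_le <|
    map_zero_le_of_convexOn_of_even convexOn even (Set.mem_univ y) (Set.mem_univ (-y))

end symbolDefect

theorem sq_sub_psi4_eq_symbolDefect_div {h : ℝ} (hh : h ≠ 0) (ξ : ℝ) :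
    ξ ^ 2 - psi4 h ξ = symbolDefect (ξ * h) / h ^ 2 := by
  rw [psi4, symbolDefect, mul_assoc 2 ξ h]
  field_simp

theorem psi4_le_sq {h : ℝ} (hh : h ≠ 0) (ξ : ℝ) : psi4 h ξ ≤ ξ ^ 2 := by
  rw [← sub_nonneg, sq_sub_psi4_eq_symbolDefect_div hh]
  exact div_nonneg (symbolDefect.nonneg _) (sq_nonneg h)

/-- For every real `y`, `(1/6)cos(2y) − (8/3)cos(y) + 5/2 ≤ y²`; equivalently,
for every `h > 0` and real `ξ`, the fourth-order discrete Laplacian symbol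
satisfies `ψ_h^{(4)}(ξ) ≤ ξ²`. -/
theorem fourth_order_symbol_upper_bound :
    (∀ y : ℝ, (1/6) * Real.cos (2*y) - (8/3) * Real.cos y + 5/2 ≤ y^2) ∧
    (∀ h : ℝ, 0 < h → ∀ ξ : ℝ, psi4 h ξ ≤ ξ^2) :=
  ⟨fun y => sub_nonneg.mp (symbolDefect.nonneg y), fun _ hh ξ => psi4_le_sq hh.ne' ξ⟩
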